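/- Let n ≥ 2 and let x_1, …, x_n be real numbers with at least two distinct values, and define S_Ψ(λ), S_{Ψ²}(λ), S_{∂Ψ}(λ), S_{∂Ψ²}(λ), S_φ and NLL as before. Then for every λ ∈ ℝ, the sign of NLL′(λ) equals the sign of the division-free expression n·S_{∂Ψ²}(λ) − 2·S_Ψ(λ)·S_{∂Ψ}(λ) − 2·S_φ·(S_{Ψ²}(λ) − S_Ψ(λ)²/n). -/

import Mathlib

open scoped BigOperators

/-- The Yeo-Johnson transformation. -/
noncomputable def yj (l x : ℝ) : ℝ :=
  if 0 ≤ x then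
    if l ≠ 0 then ((x + 1) ^ l - 1) / l else Real.log (x + 1)
  else
    if l ≠ 2 then -(((1 - x) ^ (2 - l) - 1) / (2 - l)) else -Real.log (1 - x)

/-- The partial derivative of the Yeo-Johnson transformation with respect to `λ`. -/
noncomputable def yjDeriv (l x : ℝ) : ℝ := deriv (fun t => yj t x) l

/-!
For `c > 0` the Box-Cox function `t ↦ (c ^ t - 1) / t` is the divided slope at `0` of the analytic
function `t ↦ c ^ t`, so it is differentiable through its removable singularity. The Yeo-Johnson
transformation is made of two Box-Cox pieces, so it is differentiable in `λ` and strictly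
increasing in `x`. Non-constant data therefore stay non-constant after the transformation, hence
`σ²_λ > 0`, and the chain rule exhibits the derivative of the negative log-likelihood as the
division-free expression over `2 n σ²_λ`.
-/

section DividedSlope

variable {𝕜 E : Type*} [NontriviallyNormedField 𝕜] [NormedAddCommGroup E] [NormedSpace 𝕜 E]

theorem differentiable_dslope {f : 𝕜 → E} {a : 𝕜} (hf : Differentiable 𝕜 f)
    (ha : AnalyticAt 𝕜 f a) : Differentiable 𝕜 (dslope f a) := by
  intro t
  rcases eq_or_ne t a with rfl | hta
  · obtain ⟨p, hp⟩ := ha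
    exact hp.has_fpower_series_dslope_fslope.analyticAt.differentiableAt
  · exact (differentiableAt_dslope_of_ne hta).2 (hf t)

end DividedSlope

/-- The Box-Cox transformation of `c` with parameter `t`; the Yeo-Johnson transformation consists
of two pieces of this form. -/
noncomputable def boxCox (t c : ℝ) : ℝ :=
  if t ≠ 0 then (c ^ t - 1) / t else Real.log c

theorem boxCox_one_right (t : ℝ) : boxCox t 1 = 0 := by
  simp [boxCox]

theorem boxCox_eq_dslope {c : ℝ} (hc : 0 < c) :
    (fun t => boxCox t c) = dslope (fun t : ℝ => c ^ t) 0 := by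
  funext t
  rcases eq_or_ne t 0 with rfl | ht
  · simp [boxCox, (Real.hasStrictDerivAt_const_rpow hc 0).hasDerivAt.deriv]
  · simp [boxCox, ht, dslope_of_ne, slope_def_field]

theorem differentiable_boxCox {c : ℝ} (hc : 0 < c) : Differentiable ℝ (fun t => boxCox t c) := by
  have hanalytic : AnalyticAt ℝ (fun t : ℝ => c ^ t) 0 := by
    simp only [Real.rpow_def_of_pos hc]
    fun_prop
  rw [boxCox_eq_dslope hc]
  exact differentiable_dslope
    (fun t => (Real.hasStrictDerivAt_const_rpow hc t).hasDerivAt.differentiableAt) hanalytic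

theorem strictMonoOn_boxCox (t : ℝ) : StrictMonoOn (boxCox t) (Set.Ioi 0) := by
  intro a ha b hb hab
  rcases lt_trichotomy t 0 with ht | rfl | ht
  · simp only [boxCox, if_pos ht.ne]
    exact div_lt_div_of_neg_of_lt ht
      (sub_lt_sub_right (Real.strictAntiOn_rpow_Ioi_of_exponent_neg ht ha hb hab) 1)
  · simpa only [boxCox, ne_eq, not_true_eq_false, if_false] using Real.log_lt_log ha hab
  · simp only [boxCox, if_pos ht.ne']
    exact div_lt_div_of_pos_right
      (sub_lt_sub_right (Real.rpow_lt_rpow (le_of_lt ha) hab ht) 1) ht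

theorem yj_of_nonneg (l : ℝ) {x : ℝ} (hx : 0 ≤ x) : yj l x = boxCox l (x + 1) :=
  if_pos hx

theorem yj_of_nonpos (l : ℝ) {x : ℝ} (hx : x ≤ 0) : yj l x = -boxCox (2 - l) (1 - x) := by
  rcases hx.eq_or_lt with rfl | hneg
  · simp [yj_of_nonneg, boxCox_one_right]
  · rcases eq_or_ne l 2 with rfl | hl
    · simp [yj, boxCox, hneg.not_ge]
    · simp [yj, boxCox, hneg.not_ge, hl, sub_ne_zero.2 hl.symm]

theorem differentiable_yj (x : ℝ) : Differentiable ℝ (fun t => yj t x) := by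
  rcases le_total 0 x with hx | hx
  · simp only [yj_of_nonneg _ hx]
    exact differentiable_boxCox (by linarith)
  · simp only [yj_of_nonpos _ hx]
    exact ((differentiable_boxCox (by linarith)).comp (differentiable_id.const_sub 2)).neg

theorem hasDerivAt_yj (l x : ℝ) : HasDerivAt (fun t => yj t x) (yjDeriv l x) l :=
  (differentiable_yj x l).hasDerivAt

theorem strictMono_yj (l : ℝ) : StrictMono (yj l) := by
  apply StrictMonoOn.Iic_union_Ici (a := 0)
  · intro a (ha : a ≤ 0) b (hb : b ≤ 0) hab
    rw [yj_of_nonpos l ha, yj_of_nonpos l hb, neg_lt_neg_iff]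
    exact strictMonoOn_boxCox (2 - l) (Set.mem_Ioi.2 (by linarith))
      (Set.mem_Ioi.2 (by linarith)) (by linarith)
  · intro a (ha : 0 ≤ a) b (hb : 0 ≤ b) hab
    rw [yj_of_nonneg l ha, yj_of_nonneg l hb]
    exact strictMonoOn_boxCox l (Set.mem_Ioi.2 (by linarith))
      (Set.mem_Ioi.2 (by linarith)) (by linarith)

theorem sign_div_of_pos (a : ℝ) {b : ℝ} (hb : 0 < b) : Real.sign (a / b) = Real.sign a := by
  simp only [Real.sign, div_neg_iff, div_pos_iff, hb, hb.not_gt, and_true, and_false, or_false,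
    false_or]

section ProfileLikelihood

variable {ι : Type*} [Fintype ι]

/-- The (biased) variance of a finite sample, the `σ²_λ` of the negative log-likelihood, written as
mean of squares minus square of the mean. Division by zero makes it `0` on the empty sample. -/
noncomputable def sampleVariance (y : ι → ℝ) : ℝ :=
  (∑ i, y i ^ 2) / Fintype.card ι - ((∑ i, y i) / Fintype.card ι) ^ 2

theorem sampleVariance_eq_sum_sq_sub_mean [Nonempty ι] (y : ι → ℝ) :
    sampleVariance y = (∑ i, (y i - (∑ j, y j) / Fintype.card ι) ^ 2) / Fintype.card ι := by
  simp only [sampleVariance, sub_sq, Finset.sum_add_distrib, Finset.sum_sub_distrib,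
    ← Finset.sum_mul, ← Finset.mul_sum, Finset.sum_const, Finset.card_univ, nsmul_eq_mul]
  field_simp
  ring

theorem sampleVariance_pos {y : ι → ℝ} (hy : ∃ i j, y i ≠ y j) : 0 < sampleVariance y := by
  obtain ⟨i, j, hij⟩ := hy
  have : Nonempty ι := ⟨i⟩
  rw [sampleVariance_eq_sum_sq_sub_mean]
  set m := (∑ j, y j) / Fintype.card ι
  obtain ⟨k, hk⟩ : ∃ k, y k ≠ m := by
    by_contra! hconst
    exact hij ((hconst i).trans (hconst j).symm)
  have hsum : 0 < ∑ i, (y i - m) ^ 2 :=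
    Finset.sum_pos' (fun _ _ => sq_nonneg _)
      ⟨k, Finset.mem_univ k, sq_pos_of_ne_zero (sub_ne_zero.2 hk)⟩
  positivity

theorem card_ne_zero_of_sampleVariance_ne_zero {y : ι → ℝ} (hy : sampleVariance y ≠ 0) :
    (Fintype.card ι : ℝ) ≠ 0 :=
  fun h => hy (by simp [sampleVariance, h])

/-- The Gaussian negative log-likelihood, with mean and variance profiled out, of a sample `Ψ t`
transformed with parameter `t`, where `(t - 1) * s` is the log-Jacobian of the transformation. -/
noncomputable def profileNLL (Ψ : ℝ → ι → ℝ) (s t : ℝ) : ℝ :=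
  (Fintype.card ι / 2 : ℝ) * Real.log (sampleVariance (Ψ t)) - (t - 1) * s
    + (Fintype.card ι / 2 : ℝ) * Real.log (2 * Real.pi)

variable {Ψ : ℝ → ι → ℝ} {Ψ' : ι → ℝ} {l : ℝ}

theorem hasDerivAt_sampleVariance (hΨ : ∀ i, HasDerivAt (fun t => Ψ t i) (Ψ' i) l) :
    HasDerivAt (fun t => sampleVariance (Ψ t))
      ((∑ i, 2 * Ψ l i * Ψ' i) / Fintype.card ι
        - 2 * ((∑ i, Ψ l i) / Fintype.card ι) * ((∑ i, Ψ' i) / Fintype.card ι)) l := by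
  have hsum : HasDerivAt (fun t => ∑ i, Ψ t i) (∑ i, Ψ' i) l :=
    HasDerivAt.fun_sum fun i _ => hΨ i
  have hsum_sq : HasDerivAt (fun t => ∑ i, Ψ t i ^ 2) (∑ i, 2 * Ψ l i * Ψ' i) l :=
    HasDerivAt.fun_sum fun i _ => by simpa using (hΨ i).fun_pow 2
  simpa [sampleVariance] using
    (hsum_sq.div_const (Fintype.card ι : ℝ)).fun_sub
      ((hsum.div_const (Fintype.card ι : ℝ)).fun_pow 2)

theorem hasDerivAt_profileNLL (hΨ : ∀ i, HasDerivAt (fun t => Ψ t i) (Ψ' i) l)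
    (hvar : sampleVariance (Ψ l) ≠ 0) (s : ℝ) :
    HasDerivAt (profileNLL Ψ s)
      ((Fintype.card ι * (∑ i, 2 * Ψ l i * Ψ' i) - 2 * (∑ i, Ψ l i) * (∑ i, Ψ' i)
          - 2 * s * ((∑ i, Ψ l i ^ 2) - (∑ i, Ψ l i) ^ 2 / Fintype.card ι))
        / (2 * Fintype.card ι * sampleVariance (Ψ l))) l := by
  have hcard := card_ne_zero_of_sampleVariance_ne_zero hvar
  have hscatter : (∑ i, Ψ l i ^ 2) - (∑ i, Ψ l i) ^ 2 / Fintype.card ι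
      = Fintype.card ι * sampleVariance (Ψ l) := by
    rw [sampleVariance]
    field_simp
  have hlog := ((hasDerivAt_sampleVariance hΨ).log hvar).const_mul (Fintype.card ι / 2 : ℝ)
  have hjacobian := ((hasDerivAt_id' l).sub_const 1).mul_const s
  refine ((hlog.fun_sub hjacobian).add_const _).congr_deriv ?_
  rw [hscatter]
  field_simp

theorem sign_deriv_profileNLL (hΨ : ∀ i, HasDerivAt (fun t => Ψ t i) (Ψ' i) l)
    (hvar : 0 < sampleVariance (Ψ l)) (s : ℝ) :
    Real.sign (deriv (profileNLL Ψ s) l) =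
      Real.sign (Fintype.card ι * (∑ i, 2 * Ψ l i * Ψ' i) - 2 * (∑ i, Ψ l i) * (∑ i, Ψ' i)
        - 2 * s * ((∑ i, Ψ l i ^ 2) - (∑ i, Ψ l i) ^ 2 / Fintype.card ι)) := by
  have hcard := card_ne_zero_of_sampleVariance_ne_zero hvar.ne'
  rw [(hasDerivAt_profileNLL hΨ hvar.ne' s).deriv]
  exact sign_div_of_pos _ (by positivity)

end ProfileLikelihood

/-- The sign of the derivative of the Yeo-Johnson negative log-likelihood equals the
sign of the division-free expression
`n·S_{∂Ψ²} − 2·S_Ψ·S_{∂Ψ} − 2·S_φ·(S_{Ψ²} − S_Ψ²/n)`. -/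
theorem yj_nll_deriv_sign (n : ℕ) (hn : 2 ≤ n) (x : Fin n → ℝ)
    (hdist : ∃ i j, x i ≠ x j) (l : ℝ) :
    Real.sign (deriv (fun t : ℝ =>
        (n / 2 : ℝ) *
            Real.log ((∑ i, yj t (x i) ^ 2) / n - ((∑ i, yj t (x i)) / n) ^ 2)
          - (t - 1) * ∑ i, Real.sign (x i) * Real.log (|x i| + 1)
          + (n / 2 : ℝ) * Real.log (2 * Real.pi)) l) =
      Real.sign ((n : ℝ) * (∑ i, 2 * yj l (x i) * yjDeriv l (x i))
        - 2 * (∑ i, yj l (x i)) * (∑ i, yjDeriv l (x i))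
        - 2 * (∑ i, Real.sign (x i) * Real.log (|x i| + 1)) *
            ((∑ i, yj l (x i) ^ 2) - (∑ i, yj l (x i)) ^ 2 / n)) := by
  have hvar : 0 < sampleVariance (fun i => yj l (x i)) :=
    sampleVariance_pos <| hdist.imp fun _ => Exists.imp fun _ => (strictMono_yj l).injective.ne
  have hsign := sign_deriv_profileNLL (Ψ := fun t i => yj t (x i))
    (fun i => hasDerivAt_yj l (x i)) hvar (∑ i, Real.sign (x i) * Real.log (|x i| + 1))
  unfold profileNLL at hsign
  simpa only [sampleVariance, Fintype.card_fin] using hsign
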